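/- Consider SO(n)/SO(2)×SO(n−3) as a 4-symmetric space with its unique canonical f-structure f₀. For every s, t > 0, f₀ satisfies the G₁f condition for (s,t): f₀(2·U_{s,t}(f₀X, f₀²X) − f₀(U_{s,t}(f₀X, f₀X)) + f₀(U_{s,t}(f₀²X, f₀²X))) = 0 for all X ∈ 𝔪. In other words, f₀ is a G₁f-structure with respect to every invariant Riemannian metric. -/

import Mathlib

open Matrix

namespace FlagMfld

variable {n : ℕ}

/-- Membership in `so(n)`: real skew-symmetric `n×n` matrices. -/
def inSO (X : Matrix (Fin n) (Fin n) ℝ) : Prop := Xᵀ = -X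

/-- The isotropy subalgebra `𝔥 ≅ so(2) ⊕ so(n-3)`: skew matrices whose only (possibly)
nonzero entries are `H₂₃`, `H₃₂` and `H_{ij}` with `i,j ≥ 4` (1-based indexing; indices are
0-based in the formalization, so the allowed positions are `(1,2)`, `(2,1)` and `i,j ≥ 3`). -/
def inH (X : Matrix (Fin n) (Fin n) ℝ) : Prop :=
  Xᵀ = -X ∧ ∀ i j : Fin n, X i j ≠ 0 →
    (i.val = 1 ∧ j.val = 2) ∨ (i.val = 2 ∧ j.val = 1) ∨ (3 ≤ i.val ∧ 3 ≤ j.val)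

/-- The canonical reductive complement `𝔪`: skew matrices with `S₂₃ = 0` and `S_{ij} = 0`
for all `i,j ≥ 4` (1-based). -/
def inM (X : Matrix (Fin n) (Fin n) ℝ) : Prop :=
  Xᵀ = -X ∧ (∀ i j : Fin n, i.val = 1 → j.val = 2 → X i j = 0) ∧
    ∀ i j : Fin n, 3 ≤ i.val → 3 ≤ j.val → X i j = 0

/-- `𝔪₁`: only `S₁₂`, `S₁₃` (and skew partners) may be nonzero. -/
def inM1 (X : Matrix (Fin n) (Fin n) ℝ) : Prop :=
  Xᵀ = -X ∧ ∀ i j : Fin n, X i j ≠ 0 →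
    (i.val = 0 ∧ (j.val = 1 ∨ j.val = 2)) ∨ (j.val = 0 ∧ (i.val = 1 ∨ i.val = 2))

/-- `𝔪₂`: only `S_{2j}`, `S_{3j}` for `j ≥ 4` (and skew partners) may be nonzero. -/
def inM2 (X : Matrix (Fin n) (Fin n) ℝ) : Prop :=
  Xᵀ = -X ∧ ∀ i j : Fin n, X i j ≠ 0 →
    ((i.val = 1 ∨ i.val = 2) ∧ 3 ≤ j.val) ∨ ((j.val = 1 ∨ j.val = 2) ∧ 3 ≤ i.val)

/-- `𝔪₃`: only `S_{1j}` for `j ≥ 4` (and skew partners) may be nonzero. -/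
def inM3 (X : Matrix (Fin n) (Fin n) ℝ) : Prop :=
  Xᵀ = -X ∧ ∀ i j : Fin n, X i j ≠ 0 →
    (i.val = 0 ∧ 3 ≤ j.val) ∨ (j.val = 0 ∧ 3 ≤ i.val)

/-- Component along `𝔪₁` of the decomposition `𝔪 = 𝔪₁ ⊕ 𝔪₂ ⊕ 𝔪₃` (entrywise). -/
def p1 (X : Matrix (Fin n) (Fin n) ℝ) : Matrix (Fin n) (Fin n) ℝ :=
  Matrix.of fun i j =>
    if (i.val = 0 ∧ (j.val = 1 ∨ j.val = 2)) ∨ (j.val = 0 ∧ (i.val = 1 ∨ i.val = 2))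
    then X i j else 0

/-- Component along `𝔪₂`. -/
def p2 (X : Matrix (Fin n) (Fin n) ℝ) : Matrix (Fin n) (Fin n) ℝ :=
  Matrix.of fun i j =>
    if ((i.val = 1 ∨ i.val = 2) ∧ 3 ≤ j.val) ∨ ((j.val = 1 ∨ j.val = 2) ∧ 3 ≤ i.val)
    then X i j else 0

/-- Component along `𝔪₃`. -/
def p3 (X : Matrix (Fin n) (Fin n) ℝ) : Matrix (Fin n) (Fin n) ℝ :=
  Matrix.of fun i j =>
    if (i.val = 0 ∧ 3 ≤ j.val) ∨ (j.val = 0 ∧ 3 ≤ i.val) then X i j else 0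

/-- Projection of `so(n)` onto `𝔪` along `𝔥` (kills the entries at `𝔥`-positions). -/
def pM (X : Matrix (Fin n) (Fin n) ℝ) : Matrix (Fin n) (Fin n) ℝ :=
  Matrix.of fun i j =>
    if (i.val = 1 ∧ j.val = 2) ∨ (i.val = 2 ∧ j.val = 1) ∨ (3 ≤ i.val ∧ 3 ≤ j.val)
    then 0 else X i j

/-- Matrix commutator `[X,Y] = XY - YX`. -/
def br (X Y : Matrix (Fin n) (Fin n) ℝ) : Matrix (Fin n) (Fin n) ℝ := X * Y - Y * X

/-- The naturally reductive metric `g₀(X,Y) = (n-1)·Tr(XᵀY)`. -/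
noncomputable def g0 (X Y : Matrix (Fin n) (Fin n) ℝ) : ℝ :=
  ((n : ℝ) - 1) * (Xᵀ * Y).trace

/-- The invariant metric with characteristic numbers `(s,t)`:
`g_{s,t}(X,Y) = g₀(X₁,Y₁) + s·g₀(X₂,Y₂) + t·g₀(X₃,Y₃)`. -/
noncomputable def gst (s t : ℝ) (X Y : Matrix (Fin n) (Fin n) ℝ) : ℝ :=
  g0 (p1 X) (p1 Y) + s * g0 (p2 X) (p2 Y) + t * g0 (p3 X) (p3 Y)

/-- The symmetric part `U_{s,t}` of the Nomizu function of the Levi-Civita connection of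
`g_{s,t}`. -/
noncomputable def Ust (s t : ℝ) (X Y : Matrix (Fin n) (Fin n) ℝ) :
    Matrix (Fin n) (Fin n) ℝ :=
  ((t - s) / 2) • (br (p2 X) (p3 Y) + br (p2 Y) (p3 X)) +
  ((t - 1) / (2 * s)) • (br (p1 X) (p3 Y) + br (p1 Y) (p3 X)) +
  ((s - 1) / (2 * t)) • (br (p1 X) (p2 Y) + br (p1 Y) (p2 X))

/-- The block-diagonal matrix `B₄ = diag(1, [[0,1],[-1,0]], -1, …, -1)`. -/
def B4 : Matrix (Fin n) (Fin n) ℝ :=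
  Matrix.of fun i j =>
    if i.val = 0 ∧ j.val = 0 then 1
    else if i.val = 1 ∧ j.val = 2 then 1
    else if i.val = 2 ∧ j.val = 1 then -1
    else if 3 ≤ i.val ∧ i = j then -1
    else 0

/-- `θ = dΦ|𝔪` for the order-4 automorphism: `θ(X) = B₄ X B₄ᵀ`. -/
def th4 (X : Matrix (Fin n) (Fin n) ℝ) : Matrix (Fin n) (Fin n) ℝ := B4 * X * B4ᵀ

/-- The canonical f-structure `f₀ = (1/2)(θ - θ³)` of the 4-symmetric space. -/
noncomputable def f0 (X : Matrix (Fin n) (Fin n) ℝ) : Matrix (Fin n) (Fin n) ℝ :=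
  (1 / 2 : ℝ) • (th4 X - th4 (th4 (th4 X)))

/-- The block-diagonal matrix `B₆ = diag(1, [[1/2,√3/2],[-√3/2,1/2]], -1, …, -1)`. -/
noncomputable def B6 : Matrix (Fin n) (Fin n) ℝ :=
  Matrix.of fun i j =>
    if i.val = 0 ∧ j.val = 0 then 1
    else if i.val = 1 ∧ j.val = 1 then 1 / 2
    else if i.val = 1 ∧ j.val = 2 then Real.sqrt 3 / 2
    else if i.val = 2 ∧ j.val = 1 then -(Real.sqrt 3 / 2)
    else if i.val = 2 ∧ j.val = 2 then 1 / 2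
    else if 3 ≤ i.val ∧ i = j then -1
    else 0

/-- `θ = dΦ|𝔪` for the order-6 automorphism: `θ(X) = B₆ X B₆ᵀ`. -/
noncomputable def th6 (X : Matrix (Fin n) (Fin n) ℝ) : Matrix (Fin n) (Fin n) ℝ :=
  B6 * X * B6ᵀ

/-- `f₁ = (1/√3)(θ - θ⁵)`. -/
noncomputable def f1 (X : Matrix (Fin n) (Fin n) ℝ) : Matrix (Fin n) (Fin n) ℝ :=
  (1 / Real.sqrt 3) • (th6 X - th6 (th6 (th6 (th6 (th6 X)))))

/-- `f₂ = (1/(2√3))(θ - θ² + θ⁴ - θ⁵)`. -/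
noncomputable def f2 (X : Matrix (Fin n) (Fin n) ℝ) : Matrix (Fin n) (Fin n) ℝ :=
  (1 / (2 * Real.sqrt 3)) •
    (th6 X - th6 (th6 X) + th6 (th6 (th6 (th6 X))) - th6 (th6 (th6 (th6 (th6 X)))))

/-- `f₃ = (1/(2√3))(θ + θ² - θ⁴ - θ⁵)`. -/
noncomputable def f3 (X : Matrix (Fin n) (Fin n) ℝ) : Matrix (Fin n) (Fin n) ℝ :=
  (1 / (2 * Real.sqrt 3)) •
    (th6 X + th6 (th6 X) - th6 (th6 (th6 (th6 X))) - th6 (th6 (th6 (th6 (th6 X)))))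

/-- `f₄ = (1/√3)(θ² - θ⁴)`. -/
noncomputable def f4 (X : Matrix (Fin n) (Fin n) ℝ) : Matrix (Fin n) (Fin n) ℝ :=
  (1 / Real.sqrt 3) • (th6 (th6 X) - th6 (th6 (th6 (th6 X))))

/-- The Killing f-structure condition for `f` w.r.t. the metric with characteristic
numbers `(s,t)`: `(1/2)[X, fX]_𝔪 + U_{s,t}(X, fX) - f(U_{s,t}(X,X)) = 0` for all `X ∈ 𝔪`. -/
def killCond (s t : ℝ) (f : Matrix (Fin n) (Fin n) ℝ → Matrix (Fin n) (Fin n) ℝ) : Prop :=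
  ∀ X : Matrix (Fin n) (Fin n) ℝ, inM X →
    (1 / 2 : ℝ) • pM (br X (f X)) + Ust s t X (f X) - f (Ust s t X X) = 0

/-- The nearly Kähler f-structure condition:
`(1/2)[fX, f²X]_𝔪 + U_{s,t}(fX, f²X) - f(U_{s,t}(fX, fX)) = 0` for all `X ∈ 𝔪`. -/
def nkCond (s t : ℝ) (f : Matrix (Fin n) (Fin n) ℝ → Matrix (Fin n) (Fin n) ℝ) : Prop :=
  ∀ X : Matrix (Fin n) (Fin n) ℝ, inM X →
    (1 / 2 : ℝ) • pM (br (f X) (f (f X))) + Ust s t (f X) (f (f X)) -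
      f (Ust s t (f X) (f X)) = 0

/-- The `G₁f` condition:
`f(2·U_{s,t}(fX, f²X) - f(U_{s,t}(fX, fX)) + f(U_{s,t}(f²X, f²X))) = 0` for all `X ∈ 𝔪`. -/
def g1Cond (s t : ℝ) (f : Matrix (Fin n) (Fin n) ℝ → Matrix (Fin n) (Fin n) ℝ) : Prop :=
  ∀ X : Matrix (Fin n) (Fin n) ℝ, inM X →
    f ((2 : ℝ) • Ust s t (f X) (f (f X)) - f (Ust s t (f X) (f X)) +
      f (Ust s t (f (f X)) (f (f X)))) = 0

end FlagMfld

namespace FlagMfld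

def dd (n : ℕ) : Fin n → ℝ := fun i => if i.val = 1 ∨ i.val = 2 then -1 else 1

lemma BB {n : ℕ} (hn : 4 ≤ n) : (B4 : Matrix (Fin n) (Fin n) ℝ) * B4 = Matrix.diagonal (dd n) := by
  have key : ∀ (i : Fin n) (v : Fin n → ℝ), ∑ k, (B4 : Matrix (Fin n) (Fin n) ℝ) i k * v k =
      if i.val = 1 then v ⟨2, by omega⟩ else if i.val = 2 then - v ⟨1, by omega⟩
      else if i.val = 0 then v i else - v i := by
    intro i v
    by_cases h1 : i.val = 1
    · rw [Finset.sum_eq_single (⟨2, by omega⟩ : Fin n)]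
      · simp [B4, h1]
      · intro b _ hb
        have : b.val ≠ 2 := fun h => hb (Fin.ext h)
        simp [B4, h1, this]
      · simp
    by_cases h2 : i.val = 2
    · rw [Finset.sum_eq_single (⟨1, by omega⟩ : Fin n)]
      · simp [B4, h2]
      · intro b _ hb
        have : b.val ≠ 1 := fun h => hb (Fin.ext h)
        simp [B4, h2, this]
      · simp
    rw [Finset.sum_eq_single i]
    · by_cases h0 : i.val = 0
      · simp [B4, h0]
      · have : 3 ≤ i.val := by omega
        simp [B4, h0, h1, h2, this]
    · intro b _ hb
      have h3 : ¬ (i.val = 0 ∧ b.val = 0) := fun h => hb (Fin.ext (by omega))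
      have h4 : ¬ i = b := fun h => hb h.symm
      simp only [B4, Matrix.of_apply, if_neg h3, h1, h2, h4]
      simp
    · simp
  ext i j
  rw [Matrix.mul_apply, key i (fun k => B4 k j), Matrix.diagonal_apply]
  simp only [B4, Matrix.of_apply, dd, Fin.ext_iff]
  split_ifs <;> first | omega | (norm_num; done) | (simp_all; done) | (exfalso; simp_all; omega)

lemma th4_sq {n : ℕ} (hn : 4 ≤ n) (X : Matrix (Fin n) (Fin n) ℝ) :
    th4 (th4 X) = Matrix.of fun i j => dd n i * X i j * dd n j := by
  have : th4 (th4 X) = (B4 * B4) * X * (B4 * B4)ᵀ := by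
    simp only [th4, Matrix.transpose_mul, Matrix.mul_assoc]
  rw [this, BB hn, Matrix.diagonal_transpose]
  ext i j
  simp

lemma dd_sq {n : ℕ} (i : Fin n) : dd n i * dd n i = 1 := by
  unfold dd; split_ifs <;> norm_num

lemma f0_even {n : ℕ} (hn : 4 ≤ n) (Z : Matrix (Fin n) (Fin n) ℝ)
    (h : ∀ i j, dd n i * Z i j * dd n j = Z i j) : f0 Z = 0 := by
  have : th4 (th4 Z) = Z := by rw [th4_sq hn]; ext i j; simp [h]
  simp [f0, this]

lemma f0_odd {n : ℕ} (hn : 4 ≤ n) (X : Matrix (Fin n) (Fin n) ℝ) (i j : Fin n) :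
    dd n i * f0 X i j * dd n j = - f0 X i j := by
  have h : th4 (th4 (th4 X)) i j = dd n i * th4 X i j * dd n j := by rw [th4_sq hn]; simp
  simp only [f0, Matrix.smul_apply, Matrix.sub_apply, h, smul_eq_mul]
  linear_combination (-(1/2) * th4 X i j) * (dd n j * dd n j * dd_sq i + dd_sq j)

lemma p3_f0 {n : ℕ} (hn : 4 ≤ n) (X : Matrix (Fin n) (Fin n) ℝ) : p3 (f0 X) = 0 := by
  ext i j
  have h := f0_odd hn X i j
  simp only [p3, Matrix.of_apply, Matrix.zero_apply]
  split_ifs with hc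
  · have h1 : dd n i = 1 := by unfold dd; rw [if_neg]; omega
    have h2 : dd n j = 1 := by unfold dd; rw [if_neg]; omega
    rw [h1, h2] at h; linarith
  · rfl

lemma p1_odd {n : ℕ} (X : Matrix (Fin n) (Fin n) ℝ) (i j : Fin n) :
    dd n i * p1 X i j * dd n j = - p1 X i j := by
  simp only [p1, dd, Matrix.of_apply]
  split_ifs <;> first | omega | ring

lemma p2_odd {n : ℕ} (X : Matrix (Fin n) (Fin n) ℝ) (i j : Fin n) :
    dd n i * p2 X i j * dd n j = - p2 X i j := by
  simp only [p2, dd, Matrix.of_apply]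
  split_ifs <;> first | omega | ring

lemma mul_even {n : ℕ} (X Y : Matrix (Fin n) (Fin n) ℝ)
    (hX : ∀ i j, dd n i * X i j * dd n j = - X i j)
    (hY : ∀ i j, dd n i * Y i j * dd n j = - Y i j) (i j : Fin n) :
    dd n i * (X * Y) i j * dd n j = (X * Y) i j := by
  rw [Matrix.mul_apply, Finset.mul_sum, Finset.sum_mul]
  refine Finset.sum_congr rfl fun k _ => ?_
  linear_combination (dd n k * Y k j * dd n j) * hX i k - X i k * hY k j
    - (dd n i * X i k * Y k j * dd n j) * dd_sq k

lemma f0_U {n : ℕ} (hn : 4 ≤ n) (s t : ℝ) (X Y : Matrix (Fin n) (Fin n) ℝ) (c : ℝ) :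
    f0 (c • Ust s t (f0 X) (f0 Y)) = 0 := by
  apply f0_even hn
  intro i j
  simp only [Ust, p3_f0 hn, br, mul_zero, zero_mul, sub_zero, add_zero, smul_zero, zero_add,
    Matrix.smul_apply, Matrix.add_apply, Matrix.sub_apply, smul_eq_mul]
  have h1 := mul_even _ _ (p1_odd (f0 X)) (p2_odd (f0 Y)) i j
  have h2 := mul_even _ _ (p2_odd (f0 Y)) (p1_odd (f0 X)) i j
  have h3 := mul_even _ _ (p1_odd (f0 Y)) (p2_odd (f0 X)) i j
  have h4 := mul_even _ _ (p2_odd (f0 X)) (p1_odd (f0 Y)) i j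
  linear_combination (c * ((s - 1) / (2 * t))) * (h1 - h2 + h3 - h4)

end FlagMfld

open FlagMfld

/-- On the 4-symmetric space `SO(n)/SO(2)×SO(n-3)`, the canonical
f-structure `f₀` is a `G₁f`-structure with respect to every invariant Riemannian metric. -/
theorem statement15 (n : ℕ) (hn : 4 ≤ n) (s t : ℝ) (hs : 0 < s) (ht : 0 < t) :
    g1Cond (n := n) s t f0 := by
  intro X _
  have h1 := f0_U hn s t X X 1
  have h2 := f0_U hn s t (f0 X) (f0 X) 1
  rw [one_smul] at h1 h2
  rw [h1, h2, sub_zero, add_zero]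
  exact f0_U hn s t X (f0 X) 2
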